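/- Let (A, m, k) be a Noetherian local ring, E the injective hull of k, and M a finitely generated A-module. Then Hom_A(Hom_A(M, E), E) is isomorphic to the m-adic completion of M. -/

import Mathlib

/-!
Dualizing twice into an injective module is an exact functor, and evaluation is a natural
transformation to it from the identity. Essentiality forces every map `A ⧸ 𝔪 → E` into the copy of
`A ⧸ 𝔪` inside `E`, so evaluation is bijective on `A ⧸ 𝔪`; by dévissage and the five lemma it is
bijective on every finitely generated module killed by a power of `𝔪`, in particular on
`M ⧸ 𝔪 ^ n M`. By Artin–Rees and essentiality every `φ : M → E` kills some `𝔪 ^ n M`, so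
`Hom(M, E) = colim Hom(M ⧸ 𝔪 ^ n M, E)` and the double dual of `M` is `lim M ⧸ 𝔪 ^ n M`.
-/

open Filter Function

section Annihilator

variable {A : Type*} [CommRing A] (I : Ideal A) {M : Type*} [AddCommGroup M] [Module A M]

lemma le_annihilator_quotient_smul_top :
    I ≤ Module.annihilator A (M ⧸ (I • ⊤ : Submodule A M)) := by
  rw [Submodule.annihilator_quotient]
  exact fun a ha ↦ Submodule.mem_colon.mpr fun x _ ↦
    Submodule.smul_mem_smul ha Submodule.mem_top

variable {I}

lemma smul_range_eq_bot_of_quotient (f : (A ⧸ I) →ₗ[A] M) : I • LinearMap.range f = ⊥ := by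
  rw [← Submodule.le_annihilator_iff]
  exact Ideal.annihilator_quotient.ge.trans
    (f.rangeRestrict.annihilator_le_of_surjective f.surjective_rangeRestrict)

end Annihilator

section Essential

variable {A : Type*} [CommRing A] {E : Type*} [AddCommGroup E] [Module A E]

/-- A submodule `N` of `E` is essential if it meets every nonzero submodule of `E` nontrivially.
An injective hull of a module `S` is given by an injective map with essential range from `S` to an
injective module. -/
def IsEssential (N : Submodule A E) : Prop :=
  ∀ P : Submodule A E, P ⊓ N = ⊥ → P = ⊥

lemma IsEssential.range_le_of_isSimpleModule {N : Submodule A E} (hN : IsEssential N)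
    {S : Type*} [AddCommGroup S] [Module A S] [IsSimpleModule A S] (φ : S →ₗ[A] E) :
    LinearMap.range φ ≤ N := by
  rw [← Submodule.map_top, Submodule.map_le_iff_le_comap]
  rcases eq_bot_or_eq_top (N.comap φ) with h | h
  · have : LinearMap.range φ = ⊥ := hN _ <| by
      rw [← Submodule.map_comap_eq, h, Submodule.map_bot]
    rw [LinearMap.range_eq_bot.mp this, Submodule.comap_zero]
  · exact h.ge

lemma IsEssential.exists_pow_smul_top_le_ker [IsNoetherianRing A] {I : Ideal A}
    {N : Submodule A E} (hN : IsEssential N) (hIN : I • N = ⊥)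
    {M : Type*} [AddCommGroup M] [Module A M] [Module.Finite A M] (φ : M →ₗ[A] E) :
    ∃ n : ℕ, I ^ n • ⊤ ≤ LinearMap.ker φ := by
  obtain ⟨k, hk⟩ := I.exists_pow_inf_eq_pow_smul (N.comap φ)
  have artinRees : I ^ (k + 1) • ⊤ ⊓ N.comap φ ≤ I • N.comap φ := by
    rw [hk (k + 1) k.le_succ, Nat.add_sub_cancel_left, pow_one]
    exact smul_mono_right I inf_le_right
  refine ⟨k + 1, (LinearMap.le_ker_iff_map ..).mpr <| hN _ <| eq_bot_iff.mpr ?_⟩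
  calc (I ^ (k + 1) • ⊤ : Submodule A M).map φ ⊓ N
      = (I ^ (k + 1) • ⊤ ⊓ N.comap φ).map φ := Submodule.map_inf_eq_map_inf_comap
    _ ≤ (I • N.comap φ).map φ := Submodule.map_mono artinRees
    _ = I • (N.comap φ).map φ := Submodule.map_smul'' ..
    _ ≤ I • N := smul_mono_right I (Submodule.map_comap_le φ N)
    _ = ⊥ := hIN

end Essential

section Baer

-- `Module.Baer` expresses injectivity without restricting the universes of the test modules.
variable {A : Type*} [CommRing A] {E : Type*} [AddCommGroup E] [Module A E]
  {M₁ M₂ M₃ : Type*} [AddCommGroup M₁] [AddCommGroup M₂] [AddCommGroup M₃]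
  [Module A M₁] [Module A M₂] [Module A M₃]

lemma lcomp_surjective_of_baer (hE : Module.Baer A E) {i : M₁ →ₗ[A] M₂} (hi : Injective i) :
    Surjective (LinearMap.lcomp A E i) :=
  hE.extension_property i hi

lemma exact_lcomp_of_baer (hE : Module.Baer A E) {i : M₁ →ₗ[A] M₂} {p : M₂ →ₗ[A] M₃}
    (h : Exact i p) : Exact (LinearMap.lcomp A E p) (LinearMap.lcomp A E i) := by
  have hrange : Exact i p.rangeRestrict := fun x ↦ by
    rw [← h x, ← LinearMap.mem_ker, p.ker_rangeRestrict, LinearMap.mem_ker]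
  have hexact := LinearMap.exact_lcomp_of_exact_of_surjective E hrange p.surjective_rangeRestrict
  have hsurj := lcomp_surjective_of_baer hE (LinearMap.range p).subtype_injective
  intro φ
  rw [hexact φ]
  constructor
  · rintro ⟨φ', rfl⟩
    obtain ⟨φ'', rfl⟩ := hsurj φ'
    exact ⟨φ'', rfl⟩
  · rintro ⟨φ'', rfl⟩
    exact ⟨φ'' ∘ₗ (LinearMap.range p).subtype, rfl⟩

end Baer

/-- The double dual `Hom(Hom(M, E), E)` of `M` with respect to `E`. -/
abbrev DoubleDual (A E M : Type*) [CommRing A] [AddCommGroup E] [Module A E] [AddCommGroup M]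
    [Module A M] : Type _ :=
  (M →ₗ[A] E) →ₗ[A] E

namespace DoubleDual

section Functor

variable (A : Type*) [CommRing A] (E : Type*) [AddCommGroup E] [Module A E]
  {M₁ M₂ M₃ : Type*} [AddCommGroup M₁] [AddCommGroup M₂] [AddCommGroup M₃]
  [Module A M₁] [Module A M₂] [Module A M₃]

/-- The biduality map `x ↦ (φ ↦ φ x)`, the natural map from a module to its double dual. -/
def eval (M : Type*) [AddCommGroup M] [Module A M] : M →ₗ[A] DoubleDual A E M :=
  LinearMap.applyₗ

/-- The action of the double dual functor on linear maps. -/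
def map (u : M₁ →ₗ[A] M₂) : DoubleDual A E M₁ →ₗ[A] DoubleDual A E M₂ :=
  LinearMap.lcomp A E (LinearMap.lcomp A E u)

variable {A E}

lemma map_comp_eval (u : M₁ →ₗ[A] M₂) : map A E u ∘ₗ eval A E M₁ = eval A E M₂ ∘ₗ u :=
  rfl

lemma map_injective (hE : Module.Baer A E) {u : M₁ →ₗ[A] M₂} (hu : Injective u) :
    Injective (map A E u) :=
  LinearMap.lcomp_injective_of_surjective _ (lcomp_surjective_of_baer hE hu)

lemma map_surjective (hE : Module.Baer A E) {u : M₁ →ₗ[A] M₂} (hu : Surjective u) :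
    Surjective (map A E u) :=
  lcomp_surjective_of_baer hE (LinearMap.lcomp_injective_of_surjective _ hu)

lemma map_exact (hE : Module.Baer A E) {i : M₁ →ₗ[A] M₂} {p : M₂ →ₗ[A] M₃} (h : Exact i p) :
    Exact (map A E i) (map A E p) :=
  exact_lcomp_of_baer hE (exact_lcomp_of_baer hE h)

end Functor

section Bijective

variable {A : Type*} [CommRing A] {E : Type*} [AddCommGroup E] [Module A E]
  {M₁ M₂ M₃ : Type*} [AddCommGroup M₁] [AddCommGroup M₂] [AddCommGroup M₃]
  [Module A M₁] [Module A M₂] [Module A M₃]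

lemma eval_bijective_of_subsingleton [Subsingleton M₁] : Bijective (eval A E M₁) :=
  ⟨injective_of_subsingleton _, surjective_to_subsingleton _⟩

lemma eval_bijective_of_equiv (e : M₁ ≃ₗ[A] M₂) (h : Bijective (eval A E M₁)) :
    Bijective (eval A E M₂) := by
  have hmap : Bijective (map A E e.toLinearMap) := (e.congrLeft E A |>.congrLeft E A).bijective
  exact (Bijective.of_comp_iff _ e.bijective).mp (hmap.comp h)

lemma eval_bijective_of_exact (hE : Module.Baer A E) {i : M₁ →ₗ[A] M₂} {p : M₂ →ₗ[A] M₃}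
    (hi : Injective i) (hp : Surjective p) (hip : Exact i p)
    (h₁ : Bijective (eval A E M₁)) (h₃ : Bijective (eval A E M₃)) :
    Bijective (eval A E M₂) :=
  LinearMap.bijective_of_surjective_of_bijective_of_bijective_of_injective
    (0 : PUnit →ₗ[A] M₁) i p (0 : M₃ →ₗ[A] PUnit)
    (0 : PUnit →ₗ[A] DoubleDual A E M₁) (map A E i) (map A E p)
    (0 : DoubleDual A E M₃ →ₗ[A] PUnit)
    0 (eval A E M₁) (eval A E M₂) (eval A E M₃) 0
    (by simp) (map_comp_eval i) (map_comp_eval p) (by simp)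
    ((i.exact_zero_iff_injective _).mpr hi) hip ((p.exact_zero_iff_surjective _).mpr hp)
    (((map A E i).exact_zero_iff_injective _).mpr (map_injective hE hi)) (map_exact hE hip)
    (((map A E p).exact_zero_iff_surjective _).mpr (map_surjective hE hp))
    (surjective_to_subsingleton _) h₁ h₃ (injective_of_subsingleton _)

lemma eval_bijective_quotient {I : Ideal A} {f : (A ⧸ I) →ₗ[A] E} (hf : Injective f)
    (hrange : ∀ φ : (A ⧸ I) →ₗ[A] E, LinearMap.range φ ≤ LinearMap.range f) :
    Bijective (eval A E (A ⧸ I)) := by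
  refine ⟨fun x y hxy ↦ hf (LinearMap.congr_fun hxy f), fun ψ ↦ ?_⟩
  have smul_f {a : A} (ha : a ∈ I) : a • f = 0 := LinearMap.ext fun x ↦
    (Submodule.mem_bot A).mp <|
      smul_range_eq_bot_of_quotient f ▸ Submodule.smul_mem_smul ha ⟨x, rfl⟩
  let φ₀ : (A ⧸ I) →ₗ[A] E := Submodule.liftQ I (LinearMap.toSpanSingleton A E (ψ f)) <| by
    intro a ha
    rw [LinearMap.mem_ker, LinearMap.toSpanSingleton_apply, ← map_smul, smul_f ha, map_zero]
  have hφ₀ : φ₀ 1 = ψ f := one_smul A (ψ f)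
  obtain ⟨x, hx⟩ : ψ f ∈ LinearMap.range f := hφ₀ ▸ hrange φ₀ ⟨1, rfl⟩
  refine ⟨x, LinearMap.ext fun φ ↦ ?_⟩
  obtain ⟨b, hb⟩ := hrange φ ⟨1, rfl⟩
  obtain ⟨a, rfl⟩ := Ideal.Quotient.mk_surjective b
  have hφ : φ = a • f := by
    refine Submodule.linearMap_qext _ (LinearMap.ext_ring ?_)
    change φ 1 = a • f 1
    rw [← hb, ← map_smul, ← Ideal.Quotient.algebraMap_eq, Algebra.algebraMap_eq_smul_one]
  change φ x = ψ φ
  rw [hφ, map_smul, ← hx, LinearMap.smul_apply]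

lemma eval_bijective_of_pow_le_annihilator [IsNoetherianRing A] (hE : Module.Baer A E)
    {I : Ideal A} [hI : I.IsMaximal] (h : Bijective (eval A E (A ⧸ I))) (n : ℕ)
    (M : Type*) [AddCommGroup M] [Module A M] [Module.Finite A M]
    (hM : I ^ n ≤ Module.annihilator A M) : Bijective (eval A E M) := by
  induction ‹Module.Finite A M› using
    IsNoetherianRing.induction_on_isQuotientEquivQuotientPrime A with
  | subsingleton N => exact eval_bijective_of_subsingleton
  | quotient N p e =>
    have hp := p.isPrime
    have hIp : I ≤ p.1 := hp.le_of_pow_le <| by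
      rwa [e.annihilator_eq, Ideal.annihilator_quotient] at hM
    obtain rfl := hI.eq_of_le hp.ne_top hIp
    exact eval_bijective_of_equiv e.symm h
  | exact N₁ N₂ N₃ i p hi hp hip h₁ h₃ =>
    exact eval_bijective_of_exact hE hi hp hip
      (h₁ (hM.trans (i.annihilator_le_of_injective hi)))
      (h₃ (hM.trans (p.annihilator_le_of_surjective hp)))

end Bijective

section Completion

variable {A : Type*} [CommRing A] {E : Type*} [AddCommGroup E] [Module A E]
  {M : Type*} [AddCommGroup M] [Module A M]

lemma exists_eventually_eq {ι : Type*} {l : Filter ι} [l.NeBot] {a : ι → M}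
    (ha : ∀ φ : M →ₗ[A] E, ∃ y, ∀ᶠ i in l, φ (a i) = y) :
    ∃ ψ : DoubleDual A E M, ∀ φ, ∀ᶠ i in l, φ (a i) = ψ φ := by
  choose v hv using ha
  refine ⟨{ toFun := v, map_add' := fun φ φ' ↦ ?_, map_smul' := fun c φ ↦ ?_ }, hv⟩
  · obtain ⟨i, hadd, h, h'⟩ := ((hv (φ + φ')).and ((hv φ).and (hv φ'))).exists
    rw [← hadd, ← h, ← h', LinearMap.add_apply]
  · obtain ⟨i, hsmul, h⟩ := ((hv (c • φ)).and (hv φ)).exists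
    rw [← hsmul, ← h, LinearMap.smul_apply, RingHom.id_apply]

variable {I : Ideal A}
  (hev : ∀ n : ℕ, Bijective (eval A E (M ⧸ (I ^ n • ⊤ : Submodule A M))))

/-- The map from the double dual of `M` to `M ⧸ I ^ n M` given by functoriality of the double dual
when `M ⧸ I ^ n M` is isomorphic to its own double dual. -/
noncomputable def reduction (n : ℕ) :
    DoubleDual A E M →ₗ[A] M ⧸ (I ^ n • ⊤ : Submodule A M) :=
  (LinearEquiv.ofBijective _ (hev n)).symm.toLinearMap ∘ₗ map A E (Submodule.mkQ _)

lemma eval_reduction (n : ℕ) (ψ : DoubleDual A E M) :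
    eval A E _ (reduction hev n ψ) = map A E (Submodule.mkQ _) ψ :=
  (LinearEquiv.ofBijective _ (hev n)).apply_symm_apply _

lemma transitionMap_comp_reduction {m n : ℕ} (hmn : m ≤ n) :
    AdicCompletion.transitionMap I M hmn ∘ₗ reduction hev n = reduction hev m := by
  refine LinearMap.ext fun ψ ↦ (hev m).1 ?_
  calc eval A E _ (AdicCompletion.transitionMap I M hmn (reduction hev n ψ))
      = map A E (AdicCompletion.transitionMap I M hmn) (eval A E _ (reduction hev n ψ)) := rfl
    _ = map A E (AdicCompletion.transitionMap I M hmn) (map A E (Submodule.mkQ _) ψ) := by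
      rw [eval_reduction]
    _ = map A E (Submodule.mkQ _) ψ := rfl
    _ = eval A E _ (reduction hev m ψ) := (eval_reduction hev m ψ).symm

/-- The map from the double dual of `M` to the `I`-adic completion of `M` assembled from the maps
`reduction`. -/
noncomputable def toAdicCompletion : DoubleDual A E M →ₗ[A] AdicCompletion I M :=
  AdicCompletion.lift I (reduction hev) (transitionMap_comp_reduction hev)

lemma apply_val_toAdicCompletion (ψ : DoubleDual A E M) {n : ℕ}
    (φ : (M ⧸ (I ^ n • ⊤ : Submodule A M)) →ₗ[A] E) :
    φ ((toAdicCompletion hev ψ).val n) = ψ (φ ∘ₗ Submodule.mkQ _) :=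
  LinearMap.congr_fun (eval_reduction hev n ψ) φ

lemma toAdicCompletion_eq_iff {ψ : DoubleDual A E M} {z : AdicCompletion I M} :
    toAdicCompletion hev ψ = z ↔
      ∀ (n : ℕ) (φ : (M ⧸ (I ^ n • ⊤ : Submodule A M)) →ₗ[A] E),
        ψ (φ ∘ₗ Submodule.mkQ _) = φ (z.val n) := by
  refine ⟨?_, fun h ↦ AdicCompletion.ext fun n ↦ (hev n).1 <| LinearMap.ext fun φ ↦ ?_⟩
  · rintro rfl n φ
    exact (apply_val_toAdicCompletion hev ψ φ).symm
  · exact (apply_val_toAdicCompletion hev ψ φ).trans (h n φ)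

lemma toAdicCompletion_eval (x : M) :
    toAdicCompletion hev (eval A E M x) = AdicCompletion.of I M x :=
  (toAdicCompletion_eq_iff hev).mpr fun _ _ ↦ rfl

variable (hker : ∀ φ : M →ₗ[A] E, ∃ n : ℕ, I ^ n • ⊤ ≤ LinearMap.ker φ)
include hker

lemma toAdicCompletion_injective : Injective (toAdicCompletion hev) := by
  rw [injective_iff_map_eq_zero]
  intro ψ hψ
  ext φ
  obtain ⟨n, hn⟩ := hker φ
  calc ψ φ = ψ (Submodule.liftQ _ φ hn ∘ₗ Submodule.mkQ _) := by rw [Submodule.liftQ_mkQ]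
    _ = Submodule.liftQ _ φ hn ((0 : AdicCompletion I M).val n) :=
      (toAdicCompletion_eq_iff hev).mp hψ n _
    _ = 0 := map_zero _

lemma toAdicCompletion_surjective : Surjective (toAdicCompletion hev) := by
  intro z
  obtain ⟨a, rfl⟩ := AdicCompletion.mk_surjective I M z
  have eventually_mkQ (n : ℕ) : ∀ᶠ k in atTop,
      Submodule.mkQ (I ^ n • ⊤) (a k) = (AdicCompletion.mk I M a).val n :=
    (eventually_ge_atTop n).mono fun k hk ↦ AdicCompletion.AdicCauchySequence.mk_eq_mk hk a
  have eventually_apply (n : ℕ) (φ : (M ⧸ (I ^ n • ⊤ : Submodule A M)) →ₗ[A] E) :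
      ∀ᶠ k in atTop, (φ ∘ₗ Submodule.mkQ _) (a k) = φ ((AdicCompletion.mk I M a).val n) :=
    (eventually_mkQ n).mono fun k hk ↦ congrArg φ hk
  obtain ⟨ψ, hψ⟩ := exists_eventually_eq (a := a) (l := atTop) fun φ : M →ₗ[A] E ↦ by
    obtain ⟨n, hn⟩ := hker φ
    exact ⟨_, Submodule.liftQ_mkQ _ φ hn ▸ eventually_apply n (Submodule.liftQ _ φ hn)⟩
  refine ⟨ψ, (toAdicCompletion_eq_iff hev).mpr fun n φ ↦ ?_⟩
  obtain ⟨k, hk, hk'⟩ := ((hψ (φ ∘ₗ Submodule.mkQ _)).and (eventually_apply n φ)).exists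
  exact hk.symm.trans hk'

end Completion

end DoubleDual

theorem stmt18_general {A : Type*} [CommRing A] [IsNoetherianRing A]
    (I : Ideal A) [hI : I.IsMaximal]
    {E : Type*} [AddCommGroup E] [Module A E] (hE : Module.Baer A E)
    {f : (A ⧸ I) →ₗ[A] E} (hf : Injective f) (hess : IsEssential (LinearMap.range f))
    (M : Type*) [AddCommGroup M] [Module A M] [Module.Finite A M] :
    ∃ e : DoubleDual A E M ≃ₗ[A] AdicCompletion I M,
      ∀ x, e (DoubleDual.eval A E M x) = AdicCompletion.of I M x := by
  have : IsSimpleModule A (A ⧸ I) := isSimpleModule_iff_isCoatom.mpr hI.out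
  have hquot : Bijective (DoubleDual.eval A E (A ⧸ I)) :=
    DoubleDual.eval_bijective_quotient hf hess.range_le_of_isSimpleModule
  have hev (n : ℕ) : Bijective (DoubleDual.eval A E (M ⧸ (I ^ n • ⊤ : Submodule A M))) :=
    DoubleDual.eval_bijective_of_pow_le_annihilator hE hquot n _
      (le_annihilator_quotient_smul_top (I ^ n))
  have hker (φ : M →ₗ[A] E) : ∃ n : ℕ, I ^ n • ⊤ ≤ LinearMap.ker φ :=
    hess.exists_pow_smul_top_le_ker (smul_range_eq_bot_of_quotient f) φ
  exact ⟨.ofBijective (DoubleDual.toAdicCompletion hev)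
    ⟨DoubleDual.toAdicCompletion_injective hev hker,
      DoubleDual.toAdicCompletion_surjective hev hker⟩,
    DoubleDual.toAdicCompletion_eval hev⟩

/-- Matlis duality: let `(A, m, k)` be a Noetherian local ring, `E` an injective hull of
the residue field `k = A/m`, and `M` a finitely generated `A`-module. Then the double
Matlis dual `Hom_A(Hom_A(M, E), E)` is isomorphic to the `m`-adic completion of `M`. -/
theorem stmt18 (A : Type) [CommRing A] [IsNoetherianRing A] [IsLocalRing A]
    (E : Type) [AddCommGroup E] [Module A E] (hE : Module.Injective A E)
    (f : (A ⧸ IsLocalRing.maximalIdeal A) →ₗ[A] E) (hf : Function.Injective f)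
    (hess : ∀ N : Submodule A E, N ⊓ LinearMap.range f = ⊥ → N = ⊥)
    (M : Type) [AddCommGroup M] [Module A M] [Module.Finite A M] :
    Nonempty (((M →ₗ[A] E) →ₗ[A] E)
      ≃ₗ[A] AdicCompletion (IsLocalRing.maximalIdeal A) M) :=
  let ⟨e, _⟩ := stmt18_general (IsLocalRing.maximalIdeal A) (.of_injective hE) hf hess M
  ⟨e⟩
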